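/- arXiv:1302.1038 — 9 statements merged into one kernel-verified Lean document; each statement's English description precedes it below -/
import Mathlib

section
/- Under the ladder system, for all n ≥ 0 one has a_n² = qⁿ(1 - qⁿ + r_n)/k₂. -/
section CommRing

variable {A : Type*} [CommRing A] {q k : A} {x r : ℕ → A}

/-- The error in the closed form `k * x n = q ^ n * (1 - q ^ n + r n)`, where `x n` stands for
`a_n²` and `k` for `k₂`. Equation (iv) of the ladder system says that each step multiplies this
error by `q ^ 2`, so it stays zero once it starts at zero. -/
def ladderDefect (q k : A) (x r : ℕ → A) (n : ℕ) : A :=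
  k * x n - q ^ n * (1 - q ^ n + r n)

theorem ladderDefect_zero : ladderDefect q k x r 0 = k * x 0 - r 0 := by
  simp [ladderDefect]

theorem ladderDefect_succ {n : ℕ}
    (h : k * x (n + 1) - k * q ^ 2 * x n =
      q ^ (1 + n) - q ^ (2 + n) - q ^ (2 + n) * r n + q ^ (1 + n) * r (n + 1)) :
    ladderDefect q k x r (n + 1) = q ^ 2 * ladderDefect q k x r n := by
  unfold ladderDefect
  linear_combination h

theorem ladderDefect_eq_pow_mul
    (h : ∀ n, k * x (n + 1) - k * q ^ 2 * x n =
      q ^ (1 + n) - q ^ (2 + n) - q ^ (2 + n) * r n + q ^ (1 + n) * r (n + 1)) (n : ℕ) :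
    ladderDefect q k x r n = (q ^ 2) ^ n * (k * x 0 - r 0) := by
  induction n with
  | zero => rw [ladderDefect_zero, pow_zero, one_mul]
  | succ n ih => rw [ladderDefect_succ (h n), ih, pow_succ' (q ^ 2), mul_assoc]

end CommRing

theorem ladder_an_sq_general {K : Type*} [Field K] {q k₂ : K} {a r : ℕ → K}
    (hk2 : k₂ ≠ 0) (ha0 : a 0 = 0) (hr0 : r 0 = 0)
    (hcomp4 : ∀ n : ℕ,
      k₂ * a (n + 1) ^ 2 - k₂ * q ^ 2 * a n ^ 2 =
        q ^ (1 + n) - q ^ (2 + n) - q ^ (2 + n) * r n + q ^ (1 + n) * r (n + 1)) (n : ℕ) :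
    a n ^ 2 = q ^ n * (1 - q ^ n + r n) / k₂ := by
  have defect_eq_zero : ladderDefect q k₂ (fun m ↦ a m ^ 2) r n = 0 := by
    simp [ladderDefect_eq_pow_mul (x := fun m ↦ a m ^ 2) hcomp4, ha0, hr0]
  rw [eq_div_iff hk2, mul_comm]
  exact sub_eq_zero.mp defect_eq_zero

/-- Under the ladder system, for all n ≥ 0 one has a_n² = qⁿ(1 - qⁿ + r_n)/k₂. -/
theorem ladder_an_sq (q k₁ k₂ k₃ : ℝ) (a b r R : ℕ → ℝ)
    (hq0 : 0 < q) (hq1 : q < 1)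
    (hk1 : k₁ ≠ 0) (hk2 : k₂ ≠ 0)
    (ha0 : a 0 = 0) (hr0 : r 0 = 0)
    (hcomp1 : ∀ n : ℕ, r (n + 1) + r n = -(b n * R n) - k₁)
    (hcomp2 : ∀ n : ℕ,
      R n - k₂ * b n / q ^ n - k₃ - (1 - q) * ∑ j ∈ Finset.range (n + 1), R j = 0)
    (hcomp30 : a 1 ^ 2 * R 1 = -(b 0 * (r 1 - r 0)))
    (hcomp3 : ∀ n : ℕ,
      a (n + 2) ^ 2 * R (n + 2) - a (n + 1) ^ 2 * R n =
        -(b (n + 1) * (r (n + 2) - r (n + 1))))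
    (hcomp4 : ∀ n : ℕ,
      k₂ * a (n + 1) ^ 2 - k₂ * q ^ 2 * a n ^ 2 =
        q ^ (1 + n) - q ^ (2 + n) - q ^ (2 + n) * r n + q ^ (1 + n) * r (n + 1)) :
    ∀ n : ℕ, a n ^ 2 = q ^ n * (1 - q ^ n + r n) / k₂ :=
  ladder_an_sq_general hk2 ha0 hr0 hcomp4
end

section
/- Under the ladder system, for all n ≥ 1 one has a_n² R_n R_{n-1} = r_n(k₁ + r_n). -/
/-!
Multiplying (iii) by `R_n` and eliminating `b_n R_n` with (i) turns both sides into differences of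
consecutive terms:
`a_{n+1}² R_{n+1} R_n - a_n² R_n R_{n-1} = r_{n+1} (k₁ + r_{n+1}) - r_n (k₁ + r_n)`.
Since both sequences start at `0`, they agree.
-/

section CommRing

variable {A : Type*} [CommRing A]

theorem mul_add_self_sub_mul_add_self_of_add_eq {k b R r r' : A}
    (hadd : r' + r = -(b * R) - k) :
    r' * (k + r') - r * (k + r) = -(b * (r' - r)) * R := by
  linear_combination (r' - r) * hadd

/-- The sequence `α` plays the role of `a_n²`. -/
theorem ladder_an_sq_Rn_Rnm1_general {k : A} {α b r R : ℕ → A} (hr_zero : r 0 = 0)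
    (hadd : ∀ n, r (n + 1) + r n = -(b n * R n) - k)
    (hdiff_zero : α 1 * R 1 = -(b 0 * (r 1 - r 0)))
    (hdiff_succ : ∀ n,
      α (n + 2) * R (n + 2) - α (n + 1) * R n = -(b (n + 1) * (r (n + 2) - r (n + 1))))
    (n : ℕ) :
    α (n + 1) * R (n + 1) * R n = r (n + 1) * (k + r (n + 1)) := by
  induction n with
  | zero =>
    calc α 1 * R 1 * R 0
        = -(b 0 * (r 1 - r 0)) * R 0 := by rw [hdiff_zero]
      _ = r 1 * (k + r 1) - r 0 * (k + r 0) :=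
        (mul_add_self_sub_mul_add_self_of_add_eq (hadd 0)).symm
      _ = r 1 * (k + r 1) := by rw [hr_zero, zero_mul, sub_zero]
  | succ n ih =>
    calc α (n + 2) * R (n + 2) * R (n + 1)
        = (α (n + 2) * R (n + 2) - α (n + 1) * R n) * R (n + 1)
            + α (n + 1) * R (n + 1) * R n := by ring
      _ = -(b (n + 1) * (r (n + 2) - r (n + 1))) * R (n + 1)
            + r (n + 1) * (k + r (n + 1)) := by rw [hdiff_succ, ih]
      _ = r (n + 2) * (k + r (n + 2)) := by
        rw [← mul_add_self_sub_mul_add_self_of_add_eq (hadd (n + 1)), sub_add_cancel]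

end CommRing

/-- Under the ladder system, for all n ≥ 1 one has a_n² R_n R_{n-1} = r_n(k₁ + r_n). -/
theorem ladder_an_sq_Rn_Rnm1 (q k₁ k₂ k₃ : ℝ) (a b r R : ℕ → ℝ)
    (hq0 : 0 < q) (hq1 : q < 1)
    (hk1 : k₁ ≠ 0) (hk2 : k₂ ≠ 0)
    (ha0 : a 0 = 0) (hr0 : r 0 = 0)
    (hcomp1 : ∀ n : ℕ, r (n + 1) + r n = -(b n * R n) - k₁)
    (hcomp2 : ∀ n : ℕ,
      R n - k₂ * b n / q ^ n - k₃ - (1 - q) * ∑ j ∈ Finset.range (n + 1), R j = 0)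
    (hcomp30 : a 1 ^ 2 * R 1 = -(b 0 * (r 1 - r 0)))
    (hcomp3 : ∀ n : ℕ,
      a (n + 2) ^ 2 * R (n + 2) - a (n + 1) ^ 2 * R n =
        -(b (n + 1) * (r (n + 2) - r (n + 1))))
    (hcomp4 : ∀ n : ℕ,
      k₂ * a (n + 1) ^ 2 - k₂ * q ^ 2 * a n ^ 2 =
        q ^ (1 + n) - q ^ (2 + n) - q ^ (2 + n) * r n + q ^ (1 + n) * r (n + 1)) :
    ∀ n : ℕ, a (n + 1) ^ 2 * R (n + 1) * R n = r (n + 1) * (k₁ + r (n + 1)) :=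
  ladder_an_sq_Rn_Rnm1_general (α := fun n ↦ a n ^ 2) hr0 hcomp1 hcomp30 hcomp3
end

section
/- Under the ladder system, for every n ≥ 1 such that 1 - qⁿ + r_n ≠ 0, one has the quadratic relation R_n² - k₃ q^{-n-1} R_n = -k₂ q^{-2n-1}((1 + r_n)(1 + r_{n+1}) - (1 - k₁)). -/
/-!
Multiplying (iii) by `R_n` and inserting (i) makes `a_n² R_n R_{n-1} - r_n² - k₁ r_n` constant in
`n`, hence zero. Apart from that, the system has the first integral
`q^{2n+1} R_n - k₃ qⁿ = k₂ (1 + r_n) b_n + k₂ a_n² R_{n-1}`, which is linear in `R`: (iii) replaces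
the right-hand side by `k₂ (1 + r_{n+1}) b_n + k₂ a_{n+1}² R_{n+1}`, and the passage from there to
`n + 1` is the difference of two instances of (ii), with `k₂ a_n² = qⁿ (1 - qⁿ + r_n)` obtained by
summing (iv). Multiplying the linear relation by `R_n` and eliminating `a_n² R_n R_{n-1}` and
`b_n R_n` gives the quadratic one.
-/

/-- The ladder system (i)–(iv) with its initial conditions, over an arbitrary field. The term
`a_n² R_{n-1}` of (iii) is written with truncated subtraction: at `n = 0` it vanishes because
`a 0 = 0`, as the convention `a₀² R_{-1} = 0` requires. -/
structure IsLadderSystem {K : Type*} [Field K] (q k₁ k₂ k₃ : K) (a b r R : ℕ → K) : Prop where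
  a_zero : a 0 = 0
  r_zero : r 0 = 0
  r_succ_add_r : ∀ n, r (n + 1) + r n = -(b n * R n) - k₁
  R_sub_sum : ∀ n,
    R n - k₂ * b n / q ^ n - k₃ - (1 - q) * ∑ j ∈ Finset.range (n + 1), R j = 0
  a_sq_mul_R_sub : ∀ n,
    a (n + 1) ^ 2 * R (n + 1) - a n ^ 2 * R (n - 1) = -(b n * (r (n + 1) - r n))
  a_sq_succ_sub : ∀ n,
    k₂ * a (n + 1) ^ 2 - k₂ * q ^ 2 * a n ^ 2 =
      q ^ (1 + n) - q ^ (2 + n) - q ^ (2 + n) * r n + q ^ (1 + n) * r (n + 1)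

namespace IsLadderSystem

variable {K : Type*} [Field K] {q k₁ k₂ k₃ : K} {a b r R : ℕ → K}

theorem k₂_mul_a_sq (h : IsLadderSystem q k₁ k₂ k₃ a b r R) (n : ℕ) :
    k₂ * a n ^ 2 = q ^ n * (1 - q ^ n + r n) := by
  induction n with
  | zero => simp [h.a_zero, h.r_zero]
  | succ n ih => linear_combination h.a_sq_succ_sub n + q ^ 2 * ih

theorem a_sq_mul_R_mul_R_pred (h : IsLadderSystem q k₁ k₂ k₃ a b r R) (n : ℕ) :
    a n ^ 2 * R n * R (n - 1) = r n ^ 2 + k₁ * r n := by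
  induction n with
  | zero => simp [h.a_zero, h.r_zero]
  | succ n ih =>
    rw [Nat.add_sub_cancel]
    linear_combination
      R n * h.a_sq_mul_R_sub n + ih - (r (n + 1) - r n) * h.r_succ_add_r n

theorem q_mul_R_succ_sub_R (h : IsLadderSystem q k₁ k₂ k₃ a b r R) (hq : q ≠ 0) (n : ℕ) :
    q ^ (n + 1) * (q * R (n + 1) - R n) = k₂ * (b (n + 1) - q * b n) := by
  have h_diff : q * R (n + 1) - R n = k₂ * b (n + 1) / q ^ (n + 1) - k₂ * b n / q ^ n := by
    have h_succ := h.R_sub_sum (n + 1)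
    rw [Finset.sum_range_succ] at h_succ
    linear_combination h_succ - h.R_sub_sum n
  rw [h_diff]
  field_simp
  ring

theorem linear_relation_succ (h : IsLadderSystem q k₁ k₂ k₃ a b r R) (hq : q ≠ 0) {n : ℕ}
    (hn : q ^ (2 * n + 1) * R n - k₃ * q ^ n =
      k₂ * (1 + r (n + 1)) * b n + k₂ * a (n + 1) ^ 2 * R (n + 1)) :
    q ^ (2 * n + 3) * R (n + 1) - k₃ * q ^ (n + 1) =
      k₂ * (1 + r (n + 1)) * b (n + 1) + k₂ * a (n + 1) ^ 2 * R n := by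
  rw [h.k₂_mul_a_sq] at hn ⊢
  linear_combination q * hn + (1 + r (n + 1)) * h.q_mul_R_succ_sub_R hq n

theorem linear_relation (h : IsLadderSystem q k₁ k₂ k₃ a b r R) (hq : q ≠ 0) (n : ℕ) :
    q ^ (2 * n + 1) * R n - k₃ * q ^ n =
      k₂ * (1 + r n) * b n + k₂ * a n ^ 2 * R (n - 1) := by
  induction n with
  | zero =>
    have h_zero := h.R_sub_sum 0
    simp only [zero_add, Finset.sum_range_one, pow_zero, div_one] at h_zero
    rw [h.a_zero, h.r_zero]
    linear_combination h_zero
  | succ n ih =>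
    have h_shifted : q ^ (2 * n + 1) * R n - k₃ * q ^ n =
        k₂ * (1 + r (n + 1)) * b n + k₂ * a (n + 1) ^ 2 * R (n + 1) := by
      linear_combination ih - k₂ * h.a_sq_mul_R_sub n
    exact h.linear_relation_succ hq h_shifted

theorem quadratic_relation (h : IsLadderSystem q k₁ k₂ k₃ a b r R) (hq : q ≠ 0) (n : ℕ) :
    q ^ (2 * n + 1) * R n ^ 2 - k₃ * q ^ n * R n =
      -k₂ * ((1 + r n) * (1 + r (n + 1)) - (1 - k₁)) := by
  linear_combination R n * h.linear_relation hq n + k₂ * h.a_sq_mul_R_mul_R_pred n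
    + k₂ * (1 + r n) * h.r_succ_add_r n

end IsLadderSystem

theorem ladder_quadratic_Rn_general {K : Type*} [Field K] {q k₁ k₂ k₃ : K} {a b r R : ℕ → K}
    (h : IsLadderSystem q k₁ k₂ k₃ a b r R) (hq : q ≠ 0) (n : ℕ) :
    R n ^ 2 - k₃ * R n / q ^ (n + 1) =
      -(k₂ / q ^ (2 * n + 1)) * ((1 + r n) * (1 + r (n + 1)) - (1 - k₁)) := by
  calc R n ^ 2 - k₃ * R n / q ^ (n + 1)
      = (q ^ (2 * n + 1) * R n ^ 2 - k₃ * q ^ n * R n) / q ^ (2 * n + 1) := by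
        field_simp
        ring
    _ = -(k₂ / q ^ (2 * n + 1)) * ((1 + r n) * (1 + r (n + 1)) - (1 - k₁)) := by
        rw [h.quadratic_relation hq]
        ring

/-- Under the ladder system, for every n ≥ 1 with 1 - qⁿ + r_n ≠ 0,
R_n² - k₃ q^{-n-1} R_n = -k₂ q^{-2n-1}((1 + r_n)(1 + r_{n+1}) - (1 - k₁)). -/
theorem ladder_quadratic_Rn (q k₁ k₂ k₃ : ℝ) (a b r R : ℕ → ℝ)
    (hq0 : 0 < q) (hq1 : q < 1)
    (hk1 : k₁ ≠ 0) (hk2 : k₂ ≠ 0)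
    (ha0 : a 0 = 0) (hr0 : r 0 = 0)
    (hcomp1 : ∀ n : ℕ, r (n + 1) + r n = -(b n * R n) - k₁)
    (hcomp2 : ∀ n : ℕ,
      R n - k₂ * b n / q ^ n - k₃ - (1 - q) * ∑ j ∈ Finset.range (n + 1), R j = 0)
    (hcomp30 : a 1 ^ 2 * R 1 = -(b 0 * (r 1 - r 0)))
    (hcomp3 : ∀ n : ℕ,
      a (n + 2) ^ 2 * R (n + 2) - a (n + 1) ^ 2 * R n =
        -(b (n + 1) * (r (n + 2) - r (n + 1))))
    (hcomp4 : ∀ n : ℕ,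
      k₂ * a (n + 1) ^ 2 - k₂ * q ^ 2 * a n ^ 2 =
        q ^ (1 + n) - q ^ (2 + n) - q ^ (2 + n) * r n + q ^ (1 + n) * r (n + 1)) :
    ∀ n : ℕ, 1 - q ^ (n + 1) + r (n + 1) ≠ 0 →
      R (n + 1) ^ 2 - k₃ * R (n + 1) / q ^ (n + 2) =
        -(k₂ / q ^ (2 * n + 3)) *
          ((1 + r (n + 1)) * (1 + r (n + 2)) - (1 - k₁)) := by
  intro n _
  have h_iii : ∀ m, a (m + 1) ^ 2 * R (m + 1) - a m ^ 2 * R (m - 1) =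
      -(b m * (r (m + 1) - r m))
    | 0 => by simpa [ha0] using hcomp30
    | m + 1 => hcomp3 m
  exact ladder_quadratic_Rn_general ⟨ha0, hr0, hcomp1, hcomp2, h_iii, hcomp4⟩ hq0.ne' (n + 1)
end

section
/- Under the ladder system, for every n ≥ 1 satisfying the nondegeneracy conditions, one has (in cleared-denominator form) R_n² (qⁿ - 1 - r_n)(r_{n-1}(qⁿ - 1 - r_n) + (qⁿ - 1)(r_n + k₁)) = -k₂ q^{-1-n} r_n (r_n + k₁)(r_n(qⁿ - 1 - r_{n+1}) + (qⁿ - 1)(r_{n+1} + k₁)). -/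
/-!
Write `p = qⁿ`, `d = 1 - p + r_n` and `t = r_n (r_n + k₁)`. Multiplying (iii) by `R_n` and
inserting (i) makes it telescope to `a_n² R_n R_{n-1} = t`, while (iv) telescopes to
`k₂ a_n² = p d`; hence `k₂ t = p d R_n R_{n-1}`. With this relation and (i), the two bracketed
factors `X` (left) and `Y` (right) of the claim satisfy
`p R_n X = t (p R_n + k₂ b_{n-1})` and `k₂ Y = d R_n (p R_{n-1} + k₂ b_n)`.
The difference of (ii) at `n` and `n - 1` says that the last factors of these two products agree
up to a factor `q`, so `q p R_n² d X = k₂ t Y`; division by `-q p` gives the claim.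
-/

section CommRing

variable {A : Type*} [CommRing A]

theorem ladder_sq_mul_R_mul_R {k₁ : A} {a b r R : ℕ → A} (hr0 : r 0 = 0)
    (hcomp1 : ∀ n, r (n + 1) + r n = -(b n * R n) - k₁)
    (hcomp30 : a 1 ^ 2 * R 1 = -(b 0 * (r 1 - r 0)))
    (hcomp3 : ∀ n, a (n + 2) ^ 2 * R (n + 2) - a (n + 1) ^ 2 * R n =
      -(b (n + 1) * (r (n + 2) - r (n + 1)))) (n : ℕ) :
    a (n + 1) ^ 2 * (R (n + 1) * R n) = r (n + 1) * (r (n + 1) + k₁) := by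
  induction n with
  | zero => linear_combination R 0 * hcomp30 - (r 1 - r 0) * hcomp1 0 - (r 0 + k₁) * hr0
  | succ m ih =>
    linear_combination ih + R (m + 1) * hcomp3 m - (r (m + 2) - r (m + 1)) * hcomp1 (m + 1)

theorem ladder_k₂_mul_sq {q k₂ : A} {a r : ℕ → A} (ha0 : a 0 = 0) (hr0 : r 0 = 0)
    (hcomp4 : ∀ n, k₂ * a (n + 1) ^ 2 - k₂ * q ^ 2 * a n ^ 2 =
      q ^ (1 + n) - q ^ (2 + n) - q ^ (2 + n) * r n + q ^ (1 + n) * r (n + 1)) (n : ℕ) :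
    k₂ * a n ^ 2 = q ^ n * (1 - q ^ n + r n) := by
  induction n with
  | zero => simp [ha0, hr0]
  | succ m ih => linear_combination hcomp4 m + q ^ 2 * ih

theorem ladder_k₂_mul_r_mul_r_add {q k₁ k₂ : A} {a b r R : ℕ → A}
    (ha0 : a 0 = 0) (hr0 : r 0 = 0)
    (hcomp1 : ∀ n, r (n + 1) + r n = -(b n * R n) - k₁)
    (hcomp30 : a 1 ^ 2 * R 1 = -(b 0 * (r 1 - r 0)))
    (hcomp3 : ∀ n, a (n + 2) ^ 2 * R (n + 2) - a (n + 1) ^ 2 * R n =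
      -(b (n + 1) * (r (n + 2) - r (n + 1))))
    (hcomp4 : ∀ n, k₂ * a (n + 1) ^ 2 - k₂ * q ^ 2 * a n ^ 2 =
      q ^ (1 + n) - q ^ (2 + n) - q ^ (2 + n) * r n + q ^ (1 + n) * r (n + 1)) (n : ℕ) :
    k₂ * (r (n + 1) * (r (n + 1) + k₁)) =
      q ^ (n + 1) * (1 - q ^ (n + 1) + r (n + 1)) * (R (n + 1) * R n) := by
  rw [← ladder_sq_mul_R_mul_R hr0 hcomp1 hcomp30 hcomp3 n, ← mul_assoc,
    ladder_k₂_mul_sq ha0 hr0 hcomp4 (n + 1)]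

variable {p k₁ k₂ r r' b R R' : A}

theorem ladder_left_factor_eq (hprod : k₂ * (r' * (r' + k₁)) = p * (1 - p + r') * (R' * R))
    (hsum : r' + r = -(b * R) - k₁) :
    p * R' * (r * (p - 1 - r') + (p - 1) * (r' + k₁)) =
      r' * (r' + k₁) * (p * R' + k₂ * b) := by
  linear_combination -b * hprod - p * R' * (1 - p + r') * hsum

theorem ladder_right_factor_eq (hprod : k₂ * (r * (r + k₁)) = p * (1 - p + r) * (R' * R))
    (hsum : r' + r = -(b * R') - k₁) :
    k₂ * (r * (p - 1 - r') + (p - 1) * (r' + k₁)) =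
      (1 - p + r) * R' * (p * R + k₂ * b) := by
  linear_combination hprod - k₂ * (1 - p + r) * hsum

end CommRing

section Field

variable {K : Type*} [Field K]

theorem ladder_R_recurrence {q k₂ k₃ : K} {b R : ℕ → K} (hq : q ≠ 0)
    (hcomp2 : ∀ n, R n - k₂ * b n / q ^ n - k₃ -
      (1 - q) * ∑ j ∈ Finset.range (n + 1), R j = 0) (n : ℕ) :
    q * (q ^ (n + 1) * R (n + 1) + k₂ * b n) = q ^ (n + 1) * R n + k₂ * b (n + 1) := by
  have hdiff : q * R (n + 1) + k₂ * b n / q ^ n = R n + k₂ * b (n + 1) / q ^ (n + 1) := by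
    have hnext := hcomp2 (n + 1)
    rw [Finset.sum_range_succ] at hnext
    linear_combination hnext - hcomp2 n
  rw [pow_succ] at hdiff ⊢
  field_simp at hdiff
  linear_combination hdiff

theorem ladder_Rn_sq_general {q k₁ k₂ k₃ : K} {a b r R : ℕ → K} (hq : q ≠ 0)
    (ha0 : a 0 = 0) (hr0 : r 0 = 0)
    (hcomp1 : ∀ n, r (n + 1) + r n = -(b n * R n) - k₁)
    (hcomp2 : ∀ n, R n - k₂ * b n / q ^ n - k₃ -
      (1 - q) * ∑ j ∈ Finset.range (n + 1), R j = 0)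
    (hcomp30 : a 1 ^ 2 * R 1 = -(b 0 * (r 1 - r 0)))
    (hcomp3 : ∀ n, a (n + 2) ^ 2 * R (n + 2) - a (n + 1) ^ 2 * R n =
      -(b (n + 1) * (r (n + 2) - r (n + 1))))
    (hcomp4 : ∀ n, k₂ * a (n + 1) ^ 2 - k₂ * q ^ 2 * a n ^ 2 =
      q ^ (1 + n) - q ^ (2 + n) - q ^ (2 + n) * r n + q ^ (1 + n) * r (n + 1)) (n : ℕ) :
    R (n + 1) ^ 2 * (q ^ (n + 1) - 1 - r (n + 1)) *
        (r n * (q ^ (n + 1) - 1 - r (n + 1)) + (q ^ (n + 1) - 1) * (r (n + 1) + k₁)) =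
      -(k₂ / q ^ (n + 2)) * r (n + 1) * (r (n + 1) + k₁) *
        (r (n + 1) * (q ^ (n + 1) - 1 - r (n + 2)) +
          (q ^ (n + 1) - 1) * (r (n + 2) + k₁)) := by
  have hprod := ladder_k₂_mul_r_mul_r_add ha0 hr0 hcomp1 hcomp30 hcomp3 hcomp4 n
  have hleft := ladder_left_factor_eq hprod (hcomp1 n)
  have hright := ladder_right_factor_eq hprod (hcomp1 (n + 1))
  have hrec := ladder_R_recurrence hq hcomp2 n
  set p := q ^ (n + 1) with hp
  set d := 1 - p + r (n + 1) with hd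
  set t := r (n + 1) * (r (n + 1) + k₁) with ht
  set X := r n * (p - 1 - r (n + 1)) + (p - 1) * (r (n + 1) + k₁)
  set Y := r (n + 1) * (p - 1 - r (n + 2)) + (p - 1) * (r (n + 2) + k₁)
  have hcleared : q * p * (R (n + 1) ^ 2 * d * X) = k₂ * t * Y := by
    calc q * p * (R (n + 1) ^ 2 * d * X)
        = q * R (n + 1) * d * (p * R (n + 1) * X) := by ring
      _ = t * (d * R (n + 1) * (q * (p * R (n + 1) + k₂ * b n))) := by rw [hleft]; ring
      _ = t * (k₂ * Y) := by rw [hrec, hright]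
      _ = k₂ * t * Y := by ring
  have hquot : R (n + 1) ^ 2 * d * X = k₂ * t * Y / q ^ (n + 2) := by
    rw [eq_div_iff (pow_ne_zero _ hq), ← hcleared, hp]
    ring
  calc R (n + 1) ^ 2 * (p - 1 - r (n + 1)) * X = -(R (n + 1) ^ 2 * d * X) := by rw [hd]; ring
    _ = -(k₂ / q ^ (n + 2)) * r (n + 1) * (r (n + 1) + k₁) * Y := by rw [hquot, ht]; ring

end Field

/-- Under the ladder system, for every n ≥ 1 satisfying the nondegeneracy conditions,
in cleared-denominator form,
R_n² (qⁿ-1-r_n)(r_{n-1}(qⁿ-1-r_n)+(qⁿ-1)(r_n+k₁)) =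
  -k₂ q^{-1-n} r_n (r_n+k₁)(r_n(qⁿ-1-r_{n+1})+(qⁿ-1)(r_{n+1}+k₁)). -/
theorem ladder_Rn_sq (q k₁ k₂ k₃ : ℝ) (a b r R : ℕ → ℝ)
    (hq0 : 0 < q) (hq1 : q < 1)
    (hk1 : k₁ ≠ 0) (hk2 : k₂ ≠ 0)
    (ha0 : a 0 = 0) (hr0 : r 0 = 0)
    (hcomp1 : ∀ n : ℕ, r (n + 1) + r n = -(b n * R n) - k₁)
    (hcomp2 : ∀ n : ℕ,
      R n - k₂ * b n / q ^ n - k₃ - (1 - q) * ∑ j ∈ Finset.range (n + 1), R j = 0)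
    (hcomp30 : a 1 ^ 2 * R 1 = -(b 0 * (r 1 - r 0)))
    (hcomp3 : ∀ n : ℕ,
      a (n + 2) ^ 2 * R (n + 2) - a (n + 1) ^ 2 * R n =
        -(b (n + 1) * (r (n + 2) - r (n + 1))))
    (hcomp4 : ∀ n : ℕ,
      k₂ * a (n + 1) ^ 2 - k₂ * q ^ 2 * a n ^ 2 =
        q ^ (1 + n) - q ^ (2 + n) - q ^ (2 + n) * r n + q ^ (1 + n) * r (n + 1)) :
    ∀ n : ℕ, R (n + 1) ≠ 0 → R n ≠ 0 →
      1 - q ^ (n + 1) + r (n + 1) ≠ 0 → 1 - q ^ (n + 2) + r (n + 2) ≠ 0 →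
      R (n + 1) ^ 2 * (q ^ (n + 1) - 1 - r (n + 1)) *
          (r n * (q ^ (n + 1) - 1 - r (n + 1)) + (q ^ (n + 1) - 1) * (r (n + 1) + k₁)) =
        -(k₂ / q ^ (n + 2)) * r (n + 1) * (r (n + 1) + k₁) *
          (r (n + 1) * (q ^ (n + 1) - 1 - r (n + 2)) +
            (q ^ (n + 1) - 1) * (r (n + 2) + k₁)) := by
  intro n _ _ _ _
  exact ladder_Rn_sq_general hq0.ne' ha0 hr0 hcomp1 hcomp2 hcomp30 hcomp3 hcomp4 n
end

section
/- (Theorem 1) Under the ladder system, for every n ≥ 1 satisfying the nondegeneracy conditions and such that D_n := r_{n-1}(qⁿ - 1 - r_n) + (qⁿ - 1)(r_n + k₁) ≠ 0, define f_n = -k₂ q^{-1-n} r_n (r_n + k₁)(r_n(qⁿ - 1 - r_{n+1}) + (qⁿ - 1)(r_{n+1} + k₁)) / ((qⁿ - 1 - r_n) D_n) and g_n = -k₂ q^{-2n-1}((1 + r_n)(1 + r_{n+1}) - (1 - k₁)). Then f_n² - 2 f_n g_n + g_n² - k₃² q^{-2n-2} f_n = 0. -/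
/-!
Write `c_n = k₂ q⁻ⁿ b_n`. Relation (iv) sums to `k₂ a_n² = qⁿ (1 - qⁿ + r_n)`, and (i) and (iii)
together telescope to `a_{n+1}² R_{n+1} R_n = r_{n+1} (r_{n+1} + k₁)`. With the former, (iii)
becomes a relation between `R`, `r` and `c` which, combined with the difference of consecutive
instances of (ii), says that `q^{n+1} R_n - (1 - qⁿ + r_n) R_{n-1} - (1 + r_n) c_n` does not depend
on `n`; its value is `k₃`. These identities give `f_n = R_n²` and `g_n = R_n² - k₃ q^{-n-1} R_n`,
so the claim is the square of `f_n - g_n = k₃ q^{-n-1} R_n`.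
-/

/-- The ladder system: compatibility relations (i)-(iv) between the recurrence coefficients `a`, `b`
and the ladder coefficients `r`, `R`. The instance `n = 0` of (iii) is the separate field
`R_one_rel`, since it involves `R_{-1}`, whose coefficient `a₀²` vanishes. -/
structure LadderSystem {K : Type*} [Field K] (q k₁ k₂ k₃ : K) (a b r R : ℕ → K) : Prop where
  a_zero : a 0 = 0
  r_zero : r 0 = 0
  r_rel (n : ℕ) : r (n + 1) + r n = -(b n * R n) - k₁
  R_sum_rel (n : ℕ) :
    R n - k₂ * b n / q ^ n - k₃ - (1 - q) * ∑ j ∈ Finset.range (n + 1), R j = 0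
  R_one_rel : a 1 ^ 2 * R 1 = -(b 0 * (r 1 - r 0))
  R_rel (n : ℕ) :
    a (n + 2) ^ 2 * R (n + 2) - a (n + 1) ^ 2 * R n = -(b (n + 1) * (r (n + 2) - r (n + 1)))
  a_sq_rel (n : ℕ) :
    k₂ * a (n + 1) ^ 2 - k₂ * q ^ 2 * a n ^ 2 =
      q ^ (1 + n) - q ^ (2 + n) - q ^ (2 + n) * r n + q ^ (1 + n) * r (n + 1)

section LadderBracket

variable {A : Type*} [CommRing A]

/-- The polynomial whose value at `p = qⁿ` is `D_n` for `(u, v) = (r_{n-1}, r_n)` and the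
corresponding factor in the numerator of `f_n` for `(u, v) = (r_n, r_{n+1})`. -/
def ladderBracket (k₁ p u v : A) : A := u * (p - 1 - v) + (p - 1) * (v + k₁)

theorem ladderBracket_comm (k₁ p u v : A) : ladderBracket k₁ p u v = ladderBracket k₁ p v u := by
  unfold ladderBracket
  ring

theorem ladderBracket_eq (k₁ p u v : A) :
    ladderBracket k₁ p u v = u * (u + k₁) - (1 - p + u) * (v + u + k₁) := by
  unfold ladderBracket
  ring

end LadderBracket

section Definitions

variable {K : Type*} [Field K]

/-- The rescaled recurrence coefficient `c_n = k₂ q⁻ⁿ b_n` occurring in relation (ii). -/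
def scaledB (q k₂ : K) (b : ℕ → K) (n : ℕ) : K := k₂ * b n / q ^ n

/-- The first integral of the ladder system, whose constant value is `k₃`: the expression
`q^{m+1} R_m - (1 - q^m + r_m) R_{m-1} - (1 + r_m) c_m` at `m = n + 1`. -/
def firstIntegral (q k₂ : K) (b r R : ℕ → K) (n : ℕ) : K :=
  q ^ (n + 2) * R (n + 1) - (1 - q ^ (n + 1) + r (n + 1)) * R n -
    (1 + r (n + 1)) * scaledB q k₂ b (n + 1)

/-- The quantity `f_{n+1}` of the second degree equation; the index is shifted because `f_n`
involves `r_{n-1}`. -/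
def ladderF (q k₁ k₂ : K) (r : ℕ → K) (n : ℕ) : K :=
  -(k₂ / q ^ (n + 2)) * r (n + 1) * (r (n + 1) + k₁) *
    ladderBracket k₁ (q ^ (n + 1)) (r (n + 1)) (r (n + 2)) /
    ((q ^ (n + 1) - 1 - r (n + 1)) * ladderBracket k₁ (q ^ (n + 1)) (r n) (r (n + 1)))

/-- The quantity `g_{n+1}` of the second degree equation, indexed like `ladderF`. -/
def ladderG (q k₁ k₂ : K) (r : ℕ → K) (n : ℕ) : K :=
  -(k₂ / q ^ (2 * n + 3)) * ((1 + r (n + 1)) * (1 + r (n + 2)) - (1 - k₁))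

end Definitions

namespace LadderSystem

variable {K : Type*} [Field K] {q k₁ k₂ k₃ : K} {a b r R : ℕ → K}

theorem k₂_mul_a_sq (h : LadderSystem q k₁ k₂ k₃ a b r R) (n : ℕ) :
    k₂ * a n ^ 2 = q ^ n * (1 - q ^ n + r n) := by
  induction n with
  | zero => simp [h.a_zero, h.r_zero]
  | succ n ih => linear_combination h.a_sq_rel n + q ^ 2 * ih

theorem a_sq_mul_R_mul_R (h : LadderSystem q k₁ k₂ k₃ a b r R) (n : ℕ) :
    a (n + 1) ^ 2 * R (n + 1) * R n = r (n + 1) * (r (n + 1) + k₁) := by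
  induction n with
  | zero =>
    linear_combination
      R 0 * h.R_one_rel - (r 1 - r 0) * h.r_rel 0 - (r 0 + k₁) * h.r_zero
  | succ n ih =>
    linear_combination
      R (n + 1) * h.R_rel n + ih - (r (n + 2) - r (n + 1)) * h.r_rel (n + 1)

theorem k₂_mul_r_mul_r_add_k₁ (h : LadderSystem q k₁ k₂ k₃ a b r R) (n : ℕ) :
    k₂ * (r (n + 1) * (r (n + 1) + k₁)) =
      q ^ (n + 1) * (1 - q ^ (n + 1) + r (n + 1)) * R (n + 1) * R n := by
  rw [← h.a_sq_mul_R_mul_R n, ← h.k₂_mul_a_sq (n + 1)]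
  ring

theorem k₂_mul_r_add_r_add_k₁ (h : LadderSystem q k₁ k₂ k₃ a b r R) (hq : q ≠ 0) (n : ℕ) :
    k₂ * (r (n + 1) + r n + k₁) = -(q ^ n * scaledB q k₂ b n * R n) := by
  rw [h.r_rel n, scaledB, mul_div_cancel₀ _ (pow_ne_zero n hq)]
  ring

theorem scaledB_succ_sub_scaledB (h : LadderSystem q k₁ k₂ k₃ a b r R) (n : ℕ) :
    scaledB q k₂ b (n + 1) - scaledB q k₂ b n = q * R (n + 1) - R n := by
  have sum_rel_succ := h.R_sum_rel (n + 1)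
  rw [Finset.sum_range_succ] at sum_rel_succ
  unfold scaledB
  linear_combination h.R_sum_rel n - sum_rel_succ

theorem scaledB_zero (h : LadderSystem q k₁ k₂ k₃ a b r R) :
    scaledB q k₂ b 0 = q * R 0 - k₃ := by
  have sum_rel_zero := h.R_sum_rel 0
  rw [zero_add, Finset.sum_range_one] at sum_rel_zero
  unfold scaledB
  linear_combination -sum_rel_zero

theorem scaled_R_one_rel (h : LadderSystem q k₁ k₂ k₃ a b r R) :
    q * (1 - q + r 1) * R 1 = -(scaledB q k₂ b 0 * r 1) := by
  have a_one_sq := h.k₂_mul_a_sq 1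
  rw [pow_one] at a_one_sq
  rw [← a_one_sq, scaledB, pow_zero, div_one]
  linear_combination k₂ * h.R_one_rel + k₂ * b 0 * h.r_zero

theorem scaled_R_rel (h : LadderSystem q k₁ k₂ k₃ a b r R) (hq : q ≠ 0) (n : ℕ) :
    q * (1 - q ^ (n + 2) + r (n + 2)) * R (n + 2) - (1 - q ^ (n + 1) + r (n + 1)) * R n =
      -(scaledB q k₂ b (n + 1) * (r (n + 2) - r (n + 1))) := by
  have hqn : q ^ (n + 1) ≠ 0 := pow_ne_zero _ hq
  have scaled : q ^ (n + 1) * scaledB q k₂ b (n + 1) = k₂ * b (n + 1) :=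
    mul_div_cancel₀ _ hqn
  apply mul_left_cancel₀ hqn
  linear_combination
    k₂ * h.R_rel n - R (n + 2) * h.k₂_mul_a_sq (n + 2) + R n * h.k₂_mul_a_sq (n + 1) +
      (r (n + 2) - r (n + 1)) * scaled

theorem firstIntegral_eq (h : LadderSystem q k₁ k₂ k₃ a b r R) (n : ℕ) :
    firstIntegral q k₂ b r R n =
      q ^ (n + 1) * R n - q * (1 - q ^ (n + 1) + r (n + 1)) * R (n + 1) -
        (1 + r (n + 1)) * scaledB q k₂ b n := by
  unfold firstIntegral
  linear_combination -(1 + r (n + 1)) * h.scaledB_succ_sub_scaledB n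

theorem firstIntegral_zero (h : LadderSystem q k₁ k₂ k₃ a b r R) :
    firstIntegral q k₂ b r R 0 = k₃ := by
  rw [h.firstIntegral_eq 0, zero_add, pow_one]
  linear_combination -h.scaled_R_one_rel - h.scaledB_zero

theorem firstIntegral_succ (h : LadderSystem q k₁ k₂ k₃ a b r R) (hq : q ≠ 0) (n : ℕ) :
    firstIntegral q k₂ b r R (n + 1) = firstIntegral q k₂ b r R n := by
  rw [h.firstIntegral_eq (n + 1), firstIntegral]
  linear_combination -h.scaled_R_rel hq n

theorem firstIntegral_eq_k₃ (h : LadderSystem q k₁ k₂ k₃ a b r R) (hq : q ≠ 0) (n : ℕ) :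
    firstIntegral q k₂ b r R n = k₃ := by
  induction n with
  | zero => exact h.firstIntegral_zero
  | succ n ih => rw [h.firstIntegral_succ hq n, ih]

theorem k₂_mul_ladderBracket_succ (h : LadderSystem q k₁ k₂ k₃ a b r R) (hq : q ≠ 0) (n : ℕ) :
    k₂ * ladderBracket k₁ (q ^ (n + 1)) (r (n + 1)) (r (n + 2)) =
      q ^ (n + 1) * (1 - q ^ (n + 1) + r (n + 1)) * R (n + 1) *
        (scaledB q k₂ b (n + 1) + R n) := by
  rw [ladderBracket_eq]
  linear_combination
    h.k₂_mul_r_mul_r_add_k₁ n -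
      (1 - q ^ (n + 1) + r (n + 1)) * h.k₂_mul_r_add_r_add_k₁ hq (n + 1)

theorem k₂_mul_ladderBracket (h : LadderSystem q k₁ k₂ k₃ a b r R) (hq : q ≠ 0) (n : ℕ) :
    k₂ * ladderBracket k₁ (q ^ (n + 1)) (r n) (r (n + 1)) =
      q ^ n * (1 - q ^ (n + 1) + r (n + 1)) * R n * (scaledB q k₂ b n + q * R (n + 1)) := by
  rw [ladderBracket_comm, ladderBracket_eq]
  linear_combination
    h.k₂_mul_r_mul_r_add_k₁ n -
      (1 - q ^ (n + 1) + r (n + 1)) * h.k₂_mul_r_add_r_add_k₁ hq n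

theorem ladderBracket_succ_mul_R (h : LadderSystem q k₁ k₂ k₃ a b r R) (hq : q ≠ 0)
    (hk₂ : k₂ ≠ 0) (n : ℕ) :
    ladderBracket k₁ (q ^ (n + 1)) (r (n + 1)) (r (n + 2)) * R n =
      q * ladderBracket k₁ (q ^ (n + 1)) (r n) (r (n + 1)) * R (n + 1) := by
  apply mul_left_cancel₀ hk₂
  linear_combination
    R n * h.k₂_mul_ladderBracket_succ hq n - q * R (n + 1) * h.k₂_mul_ladderBracket hq n +
      q ^ (n + 1) * (1 - q ^ (n + 1) + r (n + 1)) * R (n + 1) * R n *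
        h.scaledB_succ_sub_scaledB n

theorem ladderF_eq_R_sq (h : LadderSystem q k₁ k₂ k₃ a b r R) (hq : q ≠ 0) (hk₂ : k₂ ≠ 0)
    {n : ℕ} (hr : 1 - q ^ (n + 1) + r (n + 1) ≠ 0)
    (hD : ladderBracket k₁ (q ^ (n + 1)) (r n) (r (n + 1)) ≠ 0) :
    ladderF q k₁ k₂ r n = R (n + 1) ^ 2 := by
  have hr' : q ^ (n + 1) - 1 - r (n + 1) ≠ 0 := fun h0 => hr (by linear_combination -h0)
  rw [ladderF, div_eq_iff (mul_ne_zero hr' hD)]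
  field_simp
  linear_combination
    -ladderBracket k₁ (q ^ (n + 1)) (r (n + 1)) (r (n + 2)) * h.k₂_mul_r_mul_r_add_k₁ n -
      q ^ (n + 1) * (1 - q ^ (n + 1) + r (n + 1)) * R (n + 1) *
        h.ladderBracket_succ_mul_R hq hk₂ n

theorem k₂_mul_one_add_r_mul_one_add_r_sub (h : LadderSystem q k₁ k₂ k₃ a b r R) (hq : q ≠ 0)
    (n : ℕ) :
    k₂ * ((1 + r (n + 1)) * (1 + r (n + 2)) - (1 - k₁)) =
      q ^ (n + 1) * R (n + 1) * (k₃ - q ^ (n + 2) * R (n + 1)) := by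
  have integral := h.firstIntegral_eq_k₃ hq n
  unfold firstIntegral at integral
  linear_combination
    (1 + r (n + 1)) * h.k₂_mul_r_add_r_add_k₁ hq (n + 1) - h.k₂_mul_r_mul_r_add_k₁ n +
      q ^ (n + 1) * R (n + 1) * integral

theorem ladderG_eq (h : LadderSystem q k₁ k₂ k₃ a b r R) (hq : q ≠ 0) (n : ℕ) :
    ladderG q k₁ k₂ r n = R (n + 1) ^ 2 - k₃ * R (n + 1) / q ^ (n + 2) := by
  rw [ladderG, neg_mul, div_mul_eq_mul_div, h.k₂_mul_one_add_r_mul_one_add_r_sub hq n]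
  field_simp
  ring

end LadderSystem

theorem ladder_second_degree_equation_general {K : Type*} [Field K] {q k₁ k₂ k₃ : K}
    {a b r R : ℕ → K} (h : LadderSystem q k₁ k₂ k₃ a b r R) (hq : q ≠ 0) (hk₂ : k₂ ≠ 0)
    {n : ℕ} (hr : 1 - q ^ (n + 1) + r (n + 1) ≠ 0)
    (hD : ladderBracket k₁ (q ^ (n + 1)) (r n) (r (n + 1)) ≠ 0) :
    ladderF q k₁ k₂ r n ^ 2 - 2 * ladderF q k₁ k₂ r n * ladderG q k₁ k₂ r n +
      ladderG q k₁ k₂ r n ^ 2 - k₃ ^ 2 / q ^ (2 * n + 4) * ladderF q k₁ k₂ r n = 0 := by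
  rw [h.ladderF_eq_R_sq hq hk₂ hr hD, h.ladderG_eq hq n]
  field_simp
  ring

/-- Theorem 1: the second order second degree discrete equation
f² - 2fg + g² - k₃² q^{-2n-2} f = 0 for the quantities f, g built from r_n. -/
theorem ladder_second_degree_equation (q k₁ k₂ k₃ : ℝ) (a b r R : ℕ → ℝ)
    (hq0 : 0 < q) (hq1 : q < 1)
    (hk1 : k₁ ≠ 0) (hk2 : k₂ ≠ 0)
    (ha0 : a 0 = 0) (hr0 : r 0 = 0)
    (hcomp1 : ∀ n : ℕ, r (n + 1) + r n = -(b n * R n) - k₁)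
    (hcomp2 : ∀ n : ℕ,
      R n - k₂ * b n / q ^ n - k₃ - (1 - q) * ∑ j ∈ Finset.range (n + 1), R j = 0)
    (hcomp30 : a 1 ^ 2 * R 1 = -(b 0 * (r 1 - r 0)))
    (hcomp3 : ∀ n : ℕ,
      a (n + 2) ^ 2 * R (n + 2) - a (n + 1) ^ 2 * R n =
        -(b (n + 1) * (r (n + 2) - r (n + 1))))
    (hcomp4 : ∀ n : ℕ,
      k₂ * a (n + 1) ^ 2 - k₂ * q ^ 2 * a n ^ 2 =
        q ^ (1 + n) - q ^ (2 + n) - q ^ (2 + n) * r n + q ^ (1 + n) * r (n + 1)) :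
    ∀ n : ℕ, R (n + 1) ≠ 0 → R n ≠ 0 →
      1 - q ^ (n + 1) + r (n + 1) ≠ 0 → 1 - q ^ (n + 2) + r (n + 2) ≠ 0 →
      ∀ D f g : ℝ,
        D = r n * (q ^ (n + 1) - 1 - r (n + 1)) + (q ^ (n + 1) - 1) * (r (n + 1) + k₁) →
        D ≠ 0 →
        f = -(k₂ / q ^ (n + 2)) * r (n + 1) * (r (n + 1) + k₁) *
              (r (n + 1) * (q ^ (n + 1) - 1 - r (n + 2)) +
                (q ^ (n + 1) - 1) * (r (n + 2) + k₁)) /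
              ((q ^ (n + 1) - 1 - r (n + 1)) * D) →
        g = -(k₂ / q ^ (2 * n + 3)) * ((1 + r (n + 1)) * (1 + r (n + 2)) - (1 - k₁)) →
        f ^ 2 - 2 * f * g + g ^ 2 - k₃ ^ 2 / q ^ (2 * n + 4) * f = 0 := by
  rintro n - - hr - _ _ _ rfl hD rfl rfl
  exact ladder_second_degree_equation_general
    ⟨ha0, hr0, hcomp1, hcomp2, hcomp30, hcomp3, hcomp4⟩ hq0.ne' hk2 hr hD
end

section
/- (Theorem 2, q-Painlevé V equation) Assume the ladder system with k₃ = 0 and k₁ < 1, set p = √(1 - k₁) and x_n = (1 + r_n)/p. Then for every n ≥ 1 satisfying the nondegeneracy conditions and D_n := r_{n-1}(qⁿ - 1 - r_n) + (qⁿ - 1)(r_n + k₁) ≠ 0, the sequence x_n satisfies the q-Painlevé V equation with α = β = γ = δ = 1/p, written with cleared denominators as (x_n x_{n-1} - 1)(x_n x_{n+1} - 1)(x_n - qⁿ/p)² = (q^{2n}/p²)(x_n - 1/p)²(x_n - p)². -/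
/-!
Three first integrals do the work. Relation (iv) telescopes to `k₂ a_n² = qⁿ (1 - qⁿ + r_n)`.
Relation (iii) times `R_n`, with `b_n R_n` eliminated by (i), telescopes to
`a_{n+1}² R_{n+1} R_n = r_{n+1} (r_{n+1} + k₁)`. Differencing (ii) turns (iii) into one more first
integral, linear in `R` and `b`; combined with the previous one it reads, when `k₃ = 0`,
`k₂ ((1 + r_{n+1}) (1 + r_n) - (1 - k₁)) = -q^{2n+1} R_n²`. The product of two consecutive instances
contains `R` only through `(R_{n+1} R_n)²`, which the other two integrals express in `r_{n+1}`.
-/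

/-- The ladder system: the compatibility relations (i)–(iv) between the recurrence coefficients
`a`, `b` and the auxiliary sequences `r`, `R`, over an arbitrary field. Relation (iii) is split into
its case `n = 0`, where the term `a₀² R₋₁` is absent, and its case `n + 1`. -/
structure IsLadderSystem_s5 {K : Type*} [Field K] (q k₁ k₂ k₃ : K) (a b r R : ℕ → K) : Prop where
  a_zero : a 0 = 0
  r_zero : r 0 = 0
  r_succ_add_r (n : ℕ) : r (n + 1) + r n = -(b n * R n) - k₁
  R_sub_sum (n : ℕ) :
    R n - k₂ * b n / q ^ n - k₃ - (1 - q) * ∑ j ∈ Finset.range (n + 1), R j = 0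
  a_one_sq_mul_R_one : a 1 ^ 2 * R 1 = -(b 0 * (r 1 - r 0))
  a_sq_mul_R_sub (n : ℕ) :
    a (n + 2) ^ 2 * R (n + 2) - a (n + 1) ^ 2 * R n = -(b (n + 1) * (r (n + 2) - r (n + 1)))
  a_succ_sq_sub (n : ℕ) :
    k₂ * a (n + 1) ^ 2 - k₂ * q ^ 2 * a n ^ 2 =
      q ^ (1 + n) - q ^ (2 + n) - q ^ (2 + n) * r n + q ^ (1 + n) * r (n + 1)

namespace IsLadderSystem_s5

variable {K : Type*} [Field K] {q k₁ k₂ k₃ : K} {a b r R : ℕ → K}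

theorem mul_a_sq (h : IsLadderSystem_s5 q k₁ k₂ k₃ a b r R) (n : ℕ) :
    k₂ * a n ^ 2 = q ^ n * (1 - q ^ n + r n) := by
  induction n with
  | zero => simp [h.a_zero, h.r_zero]
  | succ n ih => linear_combination h.a_succ_sq_sub n + q ^ 2 * ih

theorem a_sq_mul_R_mul_R (h : IsLadderSystem_s5 q k₁ k₂ k₃ a b r R) (n : ℕ) :
    a (n + 1) ^ 2 * R (n + 1) * R n = r (n + 1) * (r (n + 1) + k₁) := by
  induction n with
  | zero =>
    linear_combination R 0 * h.a_one_sq_mul_R_one - (r 1 - r 0) * h.r_succ_add_r 0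
      - (r 0 + k₁) * h.r_zero
  | succ n ih =>
    linear_combination R (n + 1) * h.a_sq_mul_R_sub n + ih
      - (r (n + 2) - r (n + 1)) * h.r_succ_add_r (n + 1)

theorem mul_r_mul_r_add (h : IsLadderSystem_s5 q k₁ k₂ k₃ a b r R) (n : ℕ) :
    k₂ * (r (n + 1) * (r (n + 1) + k₁)) =
      q ^ (n + 1) * (1 - q ^ (n + 1) + r (n + 1)) * (R (n + 1) * R n) := by
  linear_combination R (n + 1) * R n * h.mul_a_sq (n + 1) - k₂ * h.a_sq_mul_R_mul_R n

theorem mul_b_zero (h : IsLadderSystem_s5 q k₁ k₂ k₃ a b r R) : k₂ * b 0 = q * R 0 - k₃ := by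
  have hsum := h.R_sub_sum 0
  simp only [pow_zero, div_one, zero_add, Finset.sum_range_one] at hsum
  linear_combination -hsum

theorem mul_b_succ_sub (h : IsLadderSystem_s5 q k₁ k₂ k₃ a b r R) (hq : q ≠ 0) (n : ℕ) :
    k₂ * (b (n + 1) - q * b n) = q ^ (n + 1) * (q * R (n + 1) - R n) := by
  have hdiff : k₂ * b (n + 1) / q ^ (n + 1) - k₂ * b n / q ^ n = q * R (n + 1) - R n := by
    have hsum := h.R_sub_sum (n + 1)
    rw [Finset.sum_range_succ] at hsum
    linear_combination h.R_sub_sum n - hsum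
  rw [← hdiff]
  field_simp
  ring

theorem mul_a_sq_mul_R_add (h : IsLadderSystem_s5 q k₁ k₂ k₃ a b r R) (hq : q ≠ 0) (n : ℕ) :
    k₂ * a (n + 1) ^ 2 * R (n + 1) + (1 + r (n + 1)) * (k₂ * b n) =
      q ^ (2 * n + 1) * R n - q ^ n * k₃ := by
  induction n with
  | zero =>
    linear_combination k₂ * h.a_one_sq_mul_R_one + h.mul_b_zero + k₂ * b 0 * h.r_zero
  | succ n ih =>
    linear_combination k₂ * h.a_sq_mul_R_sub n + (1 + r (n + 1)) * h.mul_b_succ_sub hq n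
      + q * ih + (R n - q * R (n + 1)) * h.mul_a_sq (n + 1)

theorem mul_one_add_r_mul_one_add_r_sub (h : IsLadderSystem_s5 q k₁ k₂ k₃ a b r R) (hq : q ≠ 0)
    (n : ℕ) :
    k₂ * ((1 + r (n + 1)) * (1 + r n) - (1 - k₁)) =
      q ^ n * k₃ * R n - q ^ (2 * n + 1) * R n ^ 2 := by
  linear_combination k₂ * (1 + r (n + 1)) * h.r_succ_add_r n - R n * h.mul_a_sq_mul_R_add hq n
    + k₂ * h.a_sq_mul_R_mul_R n

theorem qPainleveV_unscaled (h : IsLadderSystem_s5 q k₁ k₂ 0 a b r R) (hq : q ≠ 0) (hk₂ : k₂ ≠ 0)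
    (n : ℕ) :
    ((1 + r (n + 1)) * (1 + r n) - (1 - k₁)) * ((1 + r (n + 2)) * (1 + r (n + 1)) - (1 - k₁)) *
        (1 - q ^ (n + 1) + r (n + 1)) ^ 2 =
      (q ^ (n + 1) * (r (n + 1) * (r (n + 1) + k₁))) ^ 2 := by
  set u := (1 + r (n + 1)) * (1 + r n) - (1 - k₁)
  set v := (1 + r (n + 2)) * (1 + r (n + 1)) - (1 - k₁)
  set e := 1 - q ^ (n + 1) + r (n + 1)
  have hu_sq : k₂ * u = -(q ^ (2 * n + 1) * R n ^ 2) := by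
    linear_combination h.mul_one_add_r_mul_one_add_r_sub hq n
  have hv_sq : k₂ * v = -(q ^ (2 * (n + 1) + 1) * R (n + 1) ^ 2) := by
    linear_combination h.mul_one_add_r_mul_one_add_r_sub hq (n + 1)
  apply mul_left_cancel₀ (pow_ne_zero 2 hk₂)
  calc k₂ ^ 2 * (u * v * e ^ 2)
      = (k₂ * u) * (k₂ * v) * e ^ 2 := by ring
    _ = (q ^ (n + 1) * (q ^ (n + 1) * e * (R (n + 1) * R n))) ^ 2 := by rw [hu_sq, hv_sq]; ring
    _ = (q ^ (n + 1) * (k₂ * (r (n + 1) * (r (n + 1) + k₁)))) ^ 2 := by rw [h.mul_r_mul_r_add n]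
    _ = k₂ ^ 2 * (q ^ (n + 1) * (r (n + 1) * (r (n + 1) + k₁))) ^ 2 := by ring

end IsLadderSystem_s5

theorem ladder_qPainleveV_general {K : Type*} [Field K] {q k₁ k₂ p : K} {a b r R x : ℕ → K}
    (h : IsLadderSystem_s5 q k₁ k₂ 0 a b r R) (hq : q ≠ 0) (hk₂ : k₂ ≠ 0)
    (hp : p ^ 2 = 1 - k₁) (hp₀ : p ≠ 0) (hx : ∀ m, x m = (1 + r m) / p) (n : ℕ) :
    (x (n + 1) * x n - 1) * (x (n + 1) * x (n + 2) - 1) * (x (n + 1) - q ^ (n + 1) / p) ^ 2 =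
      q ^ (2 * (n + 1)) / p ^ 2 * (x (n + 1) - 1 / p) ^ 2 * (x (n + 1) - p) ^ 2 := by
  have hr (m : ℕ) : r m = p * x m - 1 := by rw [hx]; field_simp; ring
  have hk₁ : k₁ = 1 - p ^ 2 := by linear_combination hp
  have hunscaled := h.qPainleveV_unscaled hq hk₂ n
  rw [hk₁, hr n, hr (n + 1), hr (n + 2)] at hunscaled
  field_simp
  apply mul_left_cancel₀ (pow_ne_zero 2 hp₀)
  linear_combination hunscaled

/-- Theorem 2 (q-Painlevé V): if k₃ = 0 and k₁ < 1, then x_n = (1 + r_n)/p with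
p = √(1-k₁) satisfies qP_V with α = β = γ = δ = 1/p, in cleared-denominator form. -/
theorem ladder_qPainleveV (q k₁ k₂ k₃ : ℝ) (a b r R : ℕ → ℝ)
    (hq0 : 0 < q) (hq1 : q < 1)
    (hk1 : k₁ ≠ 0) (hk2 : k₂ ≠ 0)
    (ha0 : a 0 = 0) (hr0 : r 0 = 0)
    (hcomp1 : ∀ n : ℕ, r (n + 1) + r n = -(b n * R n) - k₁)
    (hcomp2 : ∀ n : ℕ,
      R n - k₂ * b n / q ^ n - k₃ - (1 - q) * ∑ j ∈ Finset.range (n + 1), R j = 0)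
    (hcomp30 : a 1 ^ 2 * R 1 = -(b 0 * (r 1 - r 0)))
    (hcomp3 : ∀ n : ℕ,
      a (n + 2) ^ 2 * R (n + 2) - a (n + 1) ^ 2 * R n =
        -(b (n + 1) * (r (n + 2) - r (n + 1))))
    (hcomp4 : ∀ n : ℕ,
      k₂ * a (n + 1) ^ 2 - k₂ * q ^ 2 * a n ^ 2 =
        q ^ (1 + n) - q ^ (2 + n) - q ^ (2 + n) * r n + q ^ (1 + n) * r (n + 1))
    (hk3 : k₃ = 0) (hk1lt : k₁ < 1)
    (p : ℝ) (hp : p = Real.sqrt (1 - k₁))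
    (x : ℕ → ℝ) (hx : ∀ m : ℕ, x m = (1 + r m) / p) :
    ∀ n : ℕ, R (n + 1) ≠ 0 → R n ≠ 0 →
      1 - q ^ (n + 1) + r (n + 1) ≠ 0 → 1 - q ^ (n + 2) + r (n + 2) ≠ 0 →
      r n * (q ^ (n + 1) - 1 - r (n + 1)) + (q ^ (n + 1) - 1) * (r (n + 1) + k₁) ≠ 0 →
      (x (n + 1) * x n - 1) * (x (n + 1) * x (n + 2) - 1) *
          (x (n + 1) - q ^ (n + 1) / p) ^ 2 =
        q ^ (2 * (n + 1)) / p ^ 2 * (x (n + 1) - 1 / p) ^ 2 * (x (n + 1) - p) ^ 2 := by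
  subst hk3
  have hpos : 0 < 1 - k₁ := sub_pos.mpr hk1lt
  exact fun n _ _ _ _ _ ↦ ladder_qPainleveV_general
    ⟨ha0, hr0, hcomp1, hcomp2, hcomp30, hcomp3, hcomp4⟩ hq0.ne' hk2
    (hp ▸ Real.sq_sqrt hpos.le) (hp ▸ (Real.sqrt_pos.mpr hpos).ne') hx n
end

section
/- (Theorem 2, expression for b_n) Assume the ladder system with k₃ = 0 and k₁ < 1, set p = √(1 - k₁) and x_n = (1 + r_n)/p. Then for every n ≥ 1 satisfying the nondegeneracy conditions, D_n := r_{n-1}(qⁿ - 1 - r_n) + (qⁿ - 1)(r_n + k₁) ≠ 0, and x_n x_{n+1} ≠ 1, one has b_n² = -q^{2n+1}(p x_n + p x_{n+1} - 1 - p²)² / (k₂ p² (x_n x_{n+1} - 1)). -/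
/-!
Two quantities can be computed in closed form along the ladder. Multiplying (iii) by `Rₙ` and using
(i) turns both sides into differences, so `aₙ² Rₙ Rₙ₋₁ = rₙ (rₙ + k₁)`. Differencing (ii) and
solving (iv) for `k₂ aₙ²` shows that `k₂ (aₙ² Rₙ₋₁ + (1 + rₙ) bₙ) = q²ⁿ⁺¹ Rₙ - k₃ qⁿ`. Multiplying
the latter by `Rₙ` and eliminating `aₙ² Rₙ Rₙ₋₁` and `bₙ Rₙ` gives, for `k₃ = 0`,
`k₂ ((1 + rₙ) (1 + rₙ₊₁) - (1 - k₁)) = -q²ⁿ⁺¹ Rₙ²`. Multiplied by `bₙ²` this is the theorem,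
because `bₙ Rₙ = -(rₙ + rₙ₊₁ + k₁)`.
-/

/-- The ladder system (i)–(iv), over any commutative ring. Equation (ii) is multiplied by `q ^ n`,
so that it involves no division. In (iii) the term `R (n - 1)` is `R 0` for `n = 0`; it is then
multiplied by `a 0 ^ 2 = 0`, which is the convention `a₀² R₋₁ = 0`. -/
structure IsLadderSystem_s7 {K : Type*} [CommRing K] (q k₁ k₂ k₃ : K) (a b r R : ℕ → K) : Prop where
  a_zero : a 0 = 0
  r_zero : r 0 = 0
  r_succ_add_r (n : ℕ) : r (n + 1) + r n = -(b n * R n) - k₁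
  k₂_mul_b (n : ℕ) :
    k₂ * b n = q ^ n * (R n - k₃ - (1 - q) * ∑ j ∈ Finset.range (n + 1), R j)
  sq_a_mul_R_sub (n : ℕ) :
    a (n + 1) ^ 2 * R (n + 1) - a n ^ 2 * R (n - 1) = -(b n * (r (n + 1) - r n))
  k₂_mul_sq_a_sub (n : ℕ) :
    k₂ * a (n + 1) ^ 2 - k₂ * q ^ 2 * a n ^ 2 =
      q ^ (1 + n) - q ^ (2 + n) - q ^ (2 + n) * r n + q ^ (1 + n) * r (n + 1)

namespace IsLadderSystem_s7

section CommRing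

variable {K : Type*} [CommRing K] {q k₁ k₂ k₃ : K} {a b r R : ℕ → K}

theorem k₂_mul_sq_a (h : IsLadderSystem_s7 q k₁ k₂ k₃ a b r R) (n : ℕ) :
    k₂ * a n ^ 2 = q ^ n * (1 - q ^ n + r n) := by
  induction n with
  | zero => simp [h.a_zero, h.r_zero]
  | succ n ih => linear_combination h.k₂_mul_sq_a_sub n + q ^ 2 * ih

theorem k₂_mul_b_succ (h : IsLadderSystem_s7 q k₁ k₂ k₃ a b r R) (n : ℕ) :
    k₂ * b (n + 1) = q * (k₂ * b n) + q ^ (n + 1) * (q * R (n + 1) - R n) := by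
  rw [h.k₂_mul_b (n + 1), h.k₂_mul_b n, Finset.sum_range_succ _ (n + 1)]
  ring

theorem sq_a_mul_R_mul_R_pred (h : IsLadderSystem_s7 q k₁ k₂ k₃ a b r R) (n : ℕ) :
    a n ^ 2 * R n * R (n - 1) = r n * (r n + k₁) := by
  induction n with
  | zero => simp [h.a_zero, h.r_zero]
  | succ n ih =>
    rw [Nat.add_sub_cancel]
    linear_combination
      ih + R n * h.sq_a_mul_R_sub n - (r (n + 1) - r n) * h.r_succ_add_r n

theorem k₂_mul_sq_a_mul_R_pred_add (h : IsLadderSystem_s7 q k₁ k₂ k₃ a b r R) (n : ℕ) :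
    k₂ * (a n ^ 2 * R (n - 1) + (1 + r n) * b n) = q ^ (2 * n + 1) * R n - k₃ * q ^ n := by
  induction n with
  | zero =>
    have h_init : k₂ * b 0 = R 0 - k₃ - (1 - q) * R 0 := by simpa using h.k₂_mul_b 0
    simp only [h.a_zero, h.r_zero]
    linear_combination h_init
  | succ n ih =>
    have h_transfer : a n ^ 2 * R (n - 1) + (1 + r n) * b n =
        a (n + 1) ^ 2 * R (n + 1) + (1 + r (n + 1)) * b n := by
      linear_combination -h.sq_a_mul_R_sub n
    rw [h_transfer] at ih
    rw [Nat.add_sub_cancel]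
    linear_combination q * ih + (1 + r (n + 1)) * h.k₂_mul_b_succ n +
      (R n - q * R (n + 1)) * h.k₂_mul_sq_a (n + 1)

theorem k₂_mul_one_add_r_mul_sub (h : IsLadderSystem_s7 q k₁ k₂ k₃ a b r R) (n : ℕ) :
    k₂ * ((1 + r n) * (1 + r (n + 1)) - (1 - k₁)) =
      k₃ * q ^ n * R n - q ^ (2 * n + 1) * R n ^ 2 := by
  linear_combination k₂ * (1 + r n) * h.r_succ_add_r n -
    R n * h.k₂_mul_sq_a_mul_R_pred_add n + k₂ * h.sq_a_mul_R_mul_R_pred n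

end CommRing

theorem of_div_pow {K : Type*} [Field K] {q k₁ k₂ k₃ : K} {a b r R : ℕ → K} (hq : q ≠ 0)
    (ha0 : a 0 = 0) (hr0 : r 0 = 0)
    (hcomp1 : ∀ n : ℕ, r (n + 1) + r n = -(b n * R n) - k₁)
    (hcomp2 : ∀ n : ℕ,
      R n - k₂ * b n / q ^ n - k₃ - (1 - q) * ∑ j ∈ Finset.range (n + 1), R j = 0)
    (hcomp30 : a 1 ^ 2 * R 1 = -(b 0 * (r 1 - r 0)))
    (hcomp3 : ∀ n : ℕ,
      a (n + 2) ^ 2 * R (n + 2) - a (n + 1) ^ 2 * R n =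
        -(b (n + 1) * (r (n + 2) - r (n + 1))))
    (hcomp4 : ∀ n : ℕ,
      k₂ * a (n + 1) ^ 2 - k₂ * q ^ 2 * a n ^ 2 =
        q ^ (1 + n) - q ^ (2 + n) - q ^ (2 + n) * r n + q ^ (1 + n) * r (n + 1)) :
    IsLadderSystem_s7 q k₁ k₂ k₃ a b r R where
  a_zero := ha0
  r_zero := hr0
  r_succ_add_r := hcomp1
  k₂_mul_b n := by
    rw [mul_comm (q ^ n), ← div_eq_iff (pow_ne_zero n hq)]
    linear_combination -hcomp2 n
  sq_a_mul_R_sub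
    | 0 => by simpa [ha0] using hcomp30
    | n + 1 => hcomp3 n
  k₂_mul_sq_a_sub := hcomp4

end IsLadderSystem_s7

theorem ladder_bn_sq_general {K : Type*} [Field K] {q k₁ k₂ p : K} {a b r R x : ℕ → K}
    (h : IsLadderSystem_s7 q k₁ k₂ 0 a b r R) (hk₂ : k₂ ≠ 0) (hp : p ≠ 0) (hp_sq : p ^ 2 = 1 - k₁)
    (hx : ∀ m, x m = (1 + r m) / p) (n : ℕ) (hxx : x n * x (n + 1) ≠ 1) :
    b n ^ 2 = -(q ^ (2 * n + 1)) * (p * x n + p * x (n + 1) - 1 - p ^ 2) ^ 2 /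
      (k₂ * p ^ 2 * (x n * x (n + 1) - 1)) := by
  have hpx (m : ℕ) : p * x m = 1 + r m := by rw [hx, mul_div_cancel₀ _ hp]
  have h_num : p * x n + p * x (n + 1) - 1 - p ^ 2 = -(b n * R n) := by
    rw [hpx, hpx, hp_sq]
    linear_combination h.r_succ_add_r n
  have h_den : k₂ * p ^ 2 * (x n * x (n + 1) - 1) = -(q ^ (2 * n + 1) * R n ^ 2) := calc
    _ = k₂ * ((p * x n) * (p * x (n + 1)) - p ^ 2) := by ring
    _ = k₂ * ((1 + r n) * (1 + r (n + 1)) - (1 - k₁)) := by rw [hpx, hpx, hp_sq]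
    _ = -(q ^ (2 * n + 1) * R n ^ 2) := by rw [h.k₂_mul_one_add_r_mul_sub n]; ring
  have h_den_ne : k₂ * p ^ 2 * (x n * x (n + 1) - 1) ≠ 0 :=
    mul_ne_zero (mul_ne_zero hk₂ (pow_ne_zero 2 hp)) (sub_ne_zero.mpr hxx)
  rw [eq_div_iff h_den_ne, h_num, h_den]
  ring

/-- Theorem 2, expression for b_n: if k₃ = 0 and k₁ < 1 then
b_n² = -q^{2n+1}(p x_n + p x_{n+1} - 1 - p²)² / (k₂ p² (x_n x_{n+1} - 1)). -/
theorem ladder_bn_sq (q k₁ k₂ k₃ : ℝ) (a b r R : ℕ → ℝ)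
    (hq0 : 0 < q) (hq1 : q < 1)
    (hk1 : k₁ ≠ 0) (hk2 : k₂ ≠ 0)
    (ha0 : a 0 = 0) (hr0 : r 0 = 0)
    (hcomp1 : ∀ n : ℕ, r (n + 1) + r n = -(b n * R n) - k₁)
    (hcomp2 : ∀ n : ℕ,
      R n - k₂ * b n / q ^ n - k₃ - (1 - q) * ∑ j ∈ Finset.range (n + 1), R j = 0)
    (hcomp30 : a 1 ^ 2 * R 1 = -(b 0 * (r 1 - r 0)))
    (hcomp3 : ∀ n : ℕ,
      a (n + 2) ^ 2 * R (n + 2) - a (n + 1) ^ 2 * R n =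
        -(b (n + 1) * (r (n + 2) - r (n + 1))))
    (hcomp4 : ∀ n : ℕ,
      k₂ * a (n + 1) ^ 2 - k₂ * q ^ 2 * a n ^ 2 =
        q ^ (1 + n) - q ^ (2 + n) - q ^ (2 + n) * r n + q ^ (1 + n) * r (n + 1))
    (hk3 : k₃ = 0) (hk1lt : k₁ < 1)
    (p : ℝ) (hp : p = Real.sqrt (1 - k₁))
    (x : ℕ → ℝ) (hx : ∀ m : ℕ, x m = (1 + r m) / p) :
    ∀ n : ℕ, R (n + 1) ≠ 0 → R n ≠ 0 →
      1 - q ^ (n + 1) + r (n + 1) ≠ 0 → 1 - q ^ (n + 2) + r (n + 2) ≠ 0 →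
      r n * (q ^ (n + 1) - 1 - r (n + 1)) + (q ^ (n + 1) - 1) * (r (n + 1) + k₁) ≠ 0 →
      x (n + 1) * x (n + 2) ≠ 1 →
      b (n + 1) ^ 2 =
        -(q ^ (2 * n + 3)) * (p * x (n + 1) + p * x (n + 2) - 1 - p ^ 2) ^ 2 /
          (k₂ * p ^ 2 * (x (n + 1) * x (n + 2) - 1)) := by
  subst hk3
  have h := IsLadderSystem_s7.of_div_pow hq0.ne' ha0 hr0 hcomp1 hcomp2 hcomp30 hcomp3 hcomp4
  have hp_pos : 0 < p := hp ▸ Real.sqrt_pos.mpr (sub_pos.mpr hk1lt)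
  have hp_sq : p ^ 2 = 1 - k₁ := hp ▸ Real.sq_sqrt (sub_pos.mpr hk1lt).le
  exact fun n _ _ _ _ _ hxx => ladder_bn_sq_general h hk2 hp_pos.ne' hp_sq hx (n + 1) hxx
end

section
/- Let q ∈ (0,1), α > 0, c ∈ ℝ, and let w(x) = x^α (qx; q)_∞ (cqx; q)_∞ for x > 0. Then at every x > 0 with w(qx) ≠ 0, the potential relation -u(qx) w(qx) = (w(x) - w(qx))/(x(1-q)) holds with u(y) = (1/(1-q)) (q/y - q^{1-α}/y + q^{1-α}(1+c) - c q^{1-α} y); that is, u is of the form u(y) = k₁ q/((1-q)y) + (k₂ y + k₃)/(1-q) with k₁ = 1 - q^{-α}, k₂ = -c q^{1-α}, and k₃ = (1+c) q^{1-α}. -/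
/-!
Splitting off the first factor of each infinite product gives the Pearson equation
`w x = ρ * w (q * x)` with `ρ = q ^ (-α) * ((1 - q * x) * (1 - c * q * x))`. Hence
`D_q w x = (ρ - 1) / (x * (1 - q)) * w (q * x)`, and expanding `ρ` in powers of `q * x` identifies
the coefficient of `w (q * x)` as `-u (q * x)`.
-/

section QPochhammer

variable {R : Type*} [NormedCommRing R]

/-- The infinite `q`-Pochhammer symbol `(a; q)_∞`. It is meaningful for `‖q‖ < 1` in a complete
ring; elsewhere the product may diverge and take the default value of `∏'`. -/
noncomputable def qPochhammerInf (a q : R) : R :=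
  ∏' k : ℕ, (1 - a * q ^ k)

variable [NormOneClass R] [CompleteSpace R] {q : R}

theorem multipliable_one_sub_mul_pow (a : R) (hq : ‖q‖ < 1) :
    Multipliable fun k : ℕ ↦ 1 - a * q ^ k := by
  have summable_norm : Summable fun k : ℕ ↦ ‖-(a * q ^ k)‖ := by
    refine ((summable_norm_geometric_of_norm_lt_one hq).mul_left ‖a‖).of_nonneg_of_le
      (fun _ ↦ norm_nonneg _) fun k ↦ ?_
    simpa only [norm_neg] using norm_mul_le a (q ^ k)
  simpa only [sub_eq_add_neg] using multipliable_one_add_of_summable summable_norm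

theorem qPochhammerInf_eq_one_sub_mul (a : R) (hq : ‖q‖ < 1) :
    qPochhammerInf a q = (1 - a) * qPochhammerInf (a * q) q := by
  have factor_succ (k : ℕ) : 1 - a * q ^ (k + 1) = 1 - a * q * q ^ k := by ring
  have multipliable_tail : Multipliable fun k : ℕ ↦ 1 - a * q ^ (k + 1) := by
    simpa only [factor_succ] using multipliable_one_sub_mul_pow (a * q) hq
  calc ∏' k : ℕ, (1 - a * q ^ k)
      = (1 - a * q ^ 0) * ∏' k : ℕ, (1 - a * q ^ (k + 1)) :=
        tprod_eq_zero_mul' (f := fun k : ℕ ↦ 1 - a * q ^ k) multipliable_tail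
    _ = (1 - a) * ∏' k : ℕ, (1 - a * q * q ^ k) := by
        simp only [factor_succ, pow_zero, mul_one]

theorem tprod_mul_eq_qPochhammerInf_mul (a b : R) (hq : ‖q‖ < 1) :
    ∏' k : ℕ, ((1 - a * q ^ k) * (1 - b * q ^ k)) = qPochhammerInf a q * qPochhammerInf b q :=
  (multipliable_one_sub_mul_pow a hq).tprod_mul (multipliable_one_sub_mul_pow b hq)

end QPochhammer

section QDerivative

variable {K : Type*} [Field K]

/-- The Jackson `q`-derivative `D_q f`. At `x = 0` or `q = 1` division by zero makes it `0`. -/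
def qDeriv (q : K) (f : K → K) (x : K) : K :=
  (f x - f (q * x)) / (x * (1 - q))

theorem qDeriv_eq_of_eq_mul {q x r : K} {f : K → K} (hf : f x = r * f (q * x)) :
    qDeriv q f x = (r - 1) / (x * (1 - q)) * f (q * x) := by
  rw [qDeriv, hf]
  ring

end QDerivative

section LittleQLaguerre

/-- The weight `x ^ α (qx; q)_∞ (cqx; q)_∞`, intended for `0 < q < 1` and `0 < x`, with the two
infinite products merged into one. -/
noncomputable def littleQLaguerreWeight (q α c x : ℝ) : ℝ :=
  x ^ α * ∏' k : ℕ, ((1 - q ^ (k + 1) * x) * (1 - c * q ^ (k + 1) * x))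

/-- The potential `k₁ q / ((1 - q) y) + (k₂ y + k₃) / (1 - q)` of `littleQLaguerreWeight`, with
`k₁ = 1 - q ^ (-α)`, `k₂ = -c q ^ (1 - α)` and `k₃ = (1 + c) q ^ (1 - α)`. -/
noncomputable def littleQLaguerrePotential (q α c y : ℝ) : ℝ :=
  (1 - q ^ (-α)) * q / ((1 - q) * y) +
    ((-(c * q ^ (1 - α))) * y + (1 + c) * q ^ (1 - α)) / (1 - q)

variable {q x : ℝ}

theorem littleQLaguerreWeight_eq_qPochhammerInf (α c x : ℝ) (hq : ‖q‖ < 1) :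
    littleQLaguerreWeight q α c x =
      x ^ α * (qPochhammerInf (q * x) q * qPochhammerInf (c * q * x) q) := by
  rw [littleQLaguerreWeight, ← tprod_mul_eq_qPochhammerInf_mul _ _ hq]
  congr! 3 with k
  ring

theorem littleQLaguerreWeight_eq_mul (α c : ℝ) (hq0 : 0 < q) (hq1 : q < 1) (hx : 0 ≤ x) :
    littleQLaguerreWeight q α c x =
      q ^ (-α) * ((1 - q * x) * (1 - c * q * x)) * littleQLaguerreWeight q α c (q * x) := by
  have hq : ‖q‖ < 1 := by rwa [Real.norm_of_nonneg hq0.le]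
  have rpow_shift : x ^ α = q ^ (-α) * (q * x) ^ α := by
    rw [Real.mul_rpow hq0.le hx, ← mul_assoc, ← Real.rpow_add hq0, neg_add_cancel,
      Real.rpow_zero, one_mul]
  have arg_shift : q * x * q = q * (q * x) := by ring
  have arg_shift_c : c * q * x * q = c * q * (q * x) := by ring
  rw [littleQLaguerreWeight_eq_qPochhammerInf α c x hq,
    littleQLaguerreWeight_eq_qPochhammerInf α c (q * x) hq,
    qPochhammerInf_eq_one_sub_mul (q * x) hq, qPochhammerInf_eq_one_sub_mul (c * q * x) hq,
    arg_shift, arg_shift_c, rpow_shift]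
  ring

theorem neg_littleQLaguerrePotential_mul (α c : ℝ) (hq0 : 0 < q) (hq1 : q ≠ 1) (hx : x ≠ 0) :
    -littleQLaguerrePotential q α c (q * x) =
      (q ^ (-α) * ((1 - q * x) * (1 - c * q * x)) - 1) / (x * (1 - q)) := by
  have one_sub_ne_zero : 1 - q ≠ 0 := sub_ne_zero.mpr hq1.symm
  have rpow_one_sub : q ^ (1 - α) = q * q ^ (-α) := by
    rw [sub_eq_add_neg, Real.rpow_add hq0, Real.rpow_one]
  rw [littleQLaguerrePotential, rpow_one_sub]
  field_simp
  ring

theorem little_qLaguerre_potential_general (α c : ℝ) (hq0 : 0 < q) (hq1 : q < 1) (hx : 0 < x) :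
    -littleQLaguerrePotential q α c (q * x) * littleQLaguerreWeight q α c (q * x) =
      qDeriv q (littleQLaguerreWeight q α c) x := by
  rw [neg_littleQLaguerrePotential_mul α c hq0 hq1.ne hx.ne',
    qDeriv_eq_of_eq_mul (littleQLaguerreWeight_eq_mul α c hq0 hq1 hx.le)]

end LittleQLaguerre

/-- For w(x) = x^α (qx;q)_∞ (cqx;q)_∞ on x > 0, the potential relation
-u(qx) w(qx) = (w(x) - w(qx))/(x(1-q)) holds with
u(y) = k₁q/((1-q)y) + (k₂y + k₃)/(1-q), k₁ = 1 - q^{-α}, k₂ = -cq^{1-α},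
k₃ = (1+c)q^{1-α}. -/
theorem little_qLaguerre_potential (q α c : ℝ) (w u : ℝ → ℝ)
    (hq0 : 0 < q) (hq1 : q < 1) (hα : 0 < α)
    (hw : ∀ x : ℝ, 0 < x →
      w x = x ^ α * ∏' k : ℕ, ((1 - q ^ (k + 1) * x) * (1 - c * q ^ (k + 1) * x)))
    (hu : ∀ y : ℝ, y ≠ 0 →
      u y = (1 - q ^ (-α)) * q / ((1 - q) * y) +
        ((-(c * q ^ (1 - α))) * y + (1 + c) * q ^ (1 - α)) / (1 - q)) :
    ∀ x : ℝ, 0 < x → w (q * x) ≠ 0 →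
      -u (q * x) * w (q * x) = (w x - w (q * x)) / (x * (1 - q)) := by
  intro x hx _
  rw [hu _ (mul_pos hq0 hx).ne', hw x hx, hw _ (mul_pos hq0 hx)]
  exact little_qLaguerre_potential_general α c hq0 hq1 hx
end

section
/- (Example 2, case c₂ = -1) Assume the ladder system with parameters k₁ = 1 + q^{-α}/c₁, k₂ = -q^{1-α}/c₁, k₃ = 0, where α > 0, c₁ < 0 and c₁ ≠ -q^{-α} (so that k₁ ≠ 0). Set x_n = √(-c₁) q^{α/2} (1 + r_n). Then a_n² = -c₁ q^{n+α-1}(1 - qⁿ + r_n) for all n ≥ 0, and for every n ≥ 1 satisfying the nondegeneracy conditions and D_n := r_{n-1}(qⁿ - 1 - r_n) + (qⁿ - 1)(r_n + k₁) ≠ 0, x_n satisfies the q-Painlevé V equation with all four parameters equal to √(-c₁) q^{α/2}, written with cleared denominators as (x_n x_{n-1} - 1)(x_n x_{n+1} - 1)(x_n - √(-c₁) q^{n+α/2})² = (-c₁) q^{2n+α} (x_n - √(-c₁) q^{α/2})² (x_n - 1/(√(-c₁) q^{α/2}))². -/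
/-!
Put `ρ n = q ^ n * R n`. Two first integrals of the ladder system, one from (i) and (iii), the other
from (ii), (iii) and (iv), combine to
`k₂ * (1 - k₁ - (1 + r (n + 1)) * (1 + r n)) = ρ n * (q * ρ n - k₃)`.
For `k₃ = 0` the right-hand side is a multiple of `R n ^ 2`, so multiplying the relations at `n` and
`n + 1` produces `(R n * R (n + 1)) ^ 2`, and the first integral
`A (n + 1) * R (n + 1) * R n = r (n + 1) * (r (n + 1) + k₁)` turns this into a function of
`r (n + 1)` alone.
-/

/-- The ladder system (i)–(iv) with parameters `k₁`, `k₂`, `k₃` over a field. The system involves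
`a n` only through its square, so `A n` stands for `a n ^ 2`; equation (iii) is split into its
`n = 0` case and its shift to `n + 1` so that no index `-1` occurs. -/
structure IsLadder {K : Type*} [Field K] (q k₁ k₂ k₃ : K) (A b r R : ℕ → K) : Prop where
  A_zero : A 0 = 0
  r_zero : r 0 = 0
  r_succ_add_r : ∀ n, r (n + 1) + r n = -(b n * R n) - k₁
  R_sub_sum : ∀ n, R n - k₂ * b n / q ^ n - k₃ - (1 - q) * ∑ j ∈ Finset.range (n + 1), R j = 0
  A_one_mul_R_one : A 1 * R 1 = -(b 0 * (r 1 - r 0))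
  A_mul_R_sub : ∀ n,
    A (n + 2) * R (n + 2) - A (n + 1) * R n = -(b (n + 1) * (r (n + 2) - r (n + 1)))
  A_succ_sub : ∀ n, k₂ * A (n + 1) - k₂ * q ^ 2 * A n =
    q ^ (1 + n) - q ^ (2 + n) - q ^ (2 + n) * r n + q ^ (1 + n) * r (n + 1)

namespace IsLadder

variable {K : Type*} [Field K] {q k₁ k₂ k₃ : K} {A b r R : ℕ → K}

theorem k₂_mul_A (h : IsLadder q k₁ k₂ k₃ A b r R) (n : ℕ) :
    k₂ * A n = q ^ n * (1 - q ^ n + r n) := by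
  induction n with
  | zero => simp [h.A_zero, h.r_zero]
  | succ n ih => linear_combination h.A_succ_sub n + q ^ 2 * ih

theorem k₂_mul_b (h : IsLadder q k₁ k₂ k₃ A b r R) (hq : q ≠ 0) (n : ℕ) :
    k₂ * b n = q ^ n * (R n - k₃ - (1 - q) * ∑ j ∈ Finset.range (n + 1), R j) := by
  have hdiv : k₂ * b n / q ^ n = R n - k₃ - (1 - q) * ∑ j ∈ Finset.range (n + 1), R j := by
    linear_combination -h.R_sub_sum n
  rw [← hdiv, mul_div_cancel₀ _ (pow_ne_zero n hq)]

-- Multiplying (iii) by `R n` and eliminating `b n * R n` with (i) makes both sides telescope.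
theorem A_mul_R_mul_R (h : IsLadder q k₁ k₂ k₃ A b r R) (n : ℕ) :
    A (n + 1) * R (n + 1) * R n = r (n + 1) * (r (n + 1) + k₁) := by
  induction n with
  | zero =>
    linear_combination R 0 * h.A_one_mul_R_one - (r 1 - r 0) * h.r_succ_add_r 0
      - (r 0 + k₁) * h.r_zero
  | succ n ih =>
    linear_combination R (n + 1) * h.A_mul_R_sub n + ih
      - (r (n + 2) - r (n + 1)) * h.r_succ_add_r (n + 1)

-- The same telescoping after multiplying (iii) by `k₂` and eliminating `k₂ * A n` and `k₂ * b n`.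
theorem one_add_r_mul_sub_sum (h : IsLadder q k₁ k₂ k₃ A b r R) (hq : q ≠ 0) (n : ℕ) :
    (1 + r (n + 1)) *
        (q * R (n + 1) + R n - k₃ - (1 - q) * ∑ j ∈ Finset.range (n + 1), R j) =
      q ^ (n + 1) * (q * R (n + 1) + R n) - k₃ := by
  induction n with
  | zero =>
    have hb := h.k₂_mul_b hq 0
    rw [Finset.sum_range_one] at hb ⊢
    linear_combination k₂ * h.A_one_mul_R_one - R 1 * h.k₂_mul_A 1 - (r 1 - r 0) * hb
      + (q * R 0 - k₃) * h.r_zero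
  | succ n ih =>
    have hb := h.k₂_mul_b hq (n + 1)
    rw [Finset.sum_range_succ _ (n + 1)] at hb ⊢
    apply mul_left_cancel₀ (pow_ne_zero (n + 1) hq)
    linear_combination k₂ * h.A_mul_R_sub n - R (n + 2) * h.k₂_mul_A (n + 2)
      + R n * h.k₂_mul_A (n + 1) - (r (n + 2) - r (n + 1)) * hb + q ^ (n + 1) * ih

theorem k₂_mul_sub_one_add_r_mul (h : IsLadder q k₁ k₂ k₃ A b r R) (hq : q ≠ 0) (n : ℕ) :
    k₂ * (1 - k₁ - (1 + r (n + 1)) * (1 + r n)) =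
      q ^ n * R n * (q ^ (n + 1) * R n - k₃) := by
  linear_combination q ^ n * R n * h.one_add_r_mul_sub_sum hq n
    + R (n + 1) * R n * h.k₂_mul_A (n + 1) - k₂ * h.A_mul_R_mul_R n
    - (1 + r (n + 1)) * (k₂ * h.r_succ_add_r n - R n * h.k₂_mul_b hq n)

theorem qPainleveV_unscaled (h : IsLadder q k₁ k₂ 0 A b r R)
    (hq : q ≠ 0) (hk₂ : k₂ ≠ 0) (n : ℕ) :
    (1 - k₁ - (1 + r (n + 1)) * (1 + r n)) * (1 - k₁ - (1 + r (n + 2)) * (1 + r (n + 1))) *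
        (1 + r (n + 1) - q ^ (n + 1)) ^ 2 =
      (q ^ (n + 1) * r (n + 1) * (r (n + 1) + k₁)) ^ 2 := by
  have hRR : q ^ (n + 1) * (1 + r (n + 1) - q ^ (n + 1)) * R (n + 1) * R n =
      k₂ * (r (n + 1) * (r (n + 1) + k₁)) := by
    linear_combination k₂ * h.A_mul_R_mul_R n - R (n + 1) * R n * h.k₂_mul_A (n + 1)
  apply mul_left_cancel₀ (pow_ne_zero 2 hk₂)
  calc
    _ = k₂ * (1 - k₁ - (1 + r (n + 1)) * (1 + r n)) *
          (k₂ * (1 - k₁ - (1 + r (n + 2)) * (1 + r (n + 1)))) *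
          (1 + r (n + 1) - q ^ (n + 1)) ^ 2 := by ring
    _ = (q ^ (n + 1) *
          (q ^ (n + 1) * (1 + r (n + 1) - q ^ (n + 1)) * R (n + 1) * R n)) ^ 2 := by
      rw [h.k₂_mul_sub_one_add_r_mul hq n, h.k₂_mul_sub_one_add_r_mul hq (n + 1)]
      ring
    _ = k₂ ^ 2 * (q ^ (n + 1) * r (n + 1) * (r (n + 1) + k₁)) ^ 2 := by
      rw [hRR]
      ring

theorem qPainleveV {s : K} (h : IsLadder q (1 - 1 / s ^ 2) k₂ 0 A b r R)
    (hq : q ≠ 0) (hk₂ : k₂ ≠ 0) (hs : s ≠ 0) {x : ℕ → K} (hx : ∀ m, x m = s * (1 + r m)) (n : ℕ) :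
    (x (n + 1) * x n - 1) * (x (n + 1) * x (n + 2) - 1) * (x (n + 1) - s * q ^ (n + 1)) ^ 2 =
      s ^ 2 * (q ^ (n + 1)) ^ 2 * (x (n + 1) - s) ^ 2 * (x (n + 1) - 1 / s) ^ 2 := by
  have hr := h.qPainleveV_unscaled hq hk₂ n
  simp only [hx]
  field_simp at hr ⊢
  linear_combination hr

end IsLadder

theorem sq_sqrt_mul_rpow_half {c q : ℝ} (hc : 0 ≤ c) (hq : 0 ≤ q) (α : ℝ) :
    (√c * q ^ (α / 2)) ^ 2 = c * q ^ α := by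
  rw [mul_pow, Real.sq_sqrt hc, ← Real.rpow_mul_natCast hq, Nat.cast_ofNat,
    div_mul_cancel₀ α two_ne_zero]

theorem ladder_example2_qPainleveV_general {q α c₁ : ℝ} {a b r R : ℕ → ℝ}
    (hq : 0 < q) (hc₁ : c₁ < 0)
    (h : IsLadder q (1 + q ^ (-α) / c₁) (-q ^ (1 - α) / c₁) 0 (fun n ↦ a n ^ 2) b r R)
    {x : ℕ → ℝ} (hx : ∀ m, x m = √(-c₁) * q ^ (α / 2) * (1 + r m)) :
    (∀ n : ℕ, a n ^ 2 = -c₁ * q ^ ((n : ℝ) + α - 1) * (1 - q ^ n + r n)) ∧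
      ∀ n : ℕ,
        (x (n + 1) * x n - 1) * (x (n + 1) * x (n + 2) - 1) *
            (x (n + 1) - √(-c₁) * q ^ ((n : ℝ) + 1 + α / 2)) ^ 2 =
          -c₁ * q ^ (2 * (n : ℝ) + 2 + α) *
            (x (n + 1) - √(-c₁) * q ^ (α / 2)) ^ 2 *
            (x (n + 1) - 1 / (√(-c₁) * q ^ (α / 2))) ^ 2 := by
  have hs_sq := sq_sqrt_mul_rpow_half (neg_pos.2 hc₁).le hq.le α
  have hs : √(-c₁) * q ^ (α / 2) ≠ 0 :=
    (mul_pos (Real.sqrt_pos.2 (neg_pos.2 hc₁)) (Real.rpow_pos_of_pos hq _)).ne'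
  have hk₂ : -q ^ (1 - α) / c₁ ≠ 0 :=
    div_ne_zero (neg_ne_zero.2 (Real.rpow_pos_of_pos hq _).ne') hc₁.ne
  constructor
  · intro n
    apply mul_left_cancel₀ hk₂
    have hpow : q ^ (1 - α) * q ^ ((n : ℝ) + α - 1) = q ^ n := by
      rw [← Real.rpow_add hq, ← Real.rpow_natCast]
      ring_nf
    rw [h.k₂_mul_A n, ← hpow]
    field_simp [hc₁.ne]
  · intro n
    have hk₁ : 1 + q ^ (-α) / c₁ = 1 - 1 / (√(-c₁) * q ^ (α / 2)) ^ 2 := by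
      rw [hs_sq, Real.rpow_neg hq.le]
      field_simp [hc₁.ne]
      ring
    have hpow : q ^ ((n : ℝ) + 1 + α / 2) = q ^ (α / 2) * q ^ (n + 1) := by
      rw [Real.rpow_add hq, mul_comm, ← Nat.cast_add_one, Real.rpow_natCast]
    have hpow_sq : q ^ (2 * (n : ℝ) + 2 + α) = q ^ α * (q ^ (n + 1)) ^ 2 := by
      rw [Real.rpow_add hq, mul_comm, ← pow_mul, ← Real.rpow_natCast q ((n + 1) * 2)]
      push_cast
      ring_nf
    rw [hk₁] at h
    rw [hpow, hpow_sq, ← mul_assoc, ← mul_assoc, ← hs_sq]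
    exact h.qPainleveV hq.ne' hk₂ hs hx n

/-- Example 2 with c₂ = -1: under the ladder system with k₁ = 1 + q^{-α}/c₁,
k₂ = -q^{1-α}/c₁, k₃ = 0, the variable x_n = √(-c₁) q^{α/2}(1 + r_n) satisfies
a_n² = -c₁ q^{n+α-1}(1 - qⁿ + r_n) and the q-Painlevé V equation with all four
parameters equal to √(-c₁) q^{α/2} (cleared-denominator form). -/
theorem ladder_example2_qPainleveV (q k₁ k₂ k₃ α c₁ : ℝ) (a b r R : ℕ → ℝ)
    (hα : 0 < α) (hc1 : c₁ < 0) (hc1' : c₁ ≠ -q ^ (-α))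
    (hk1def : k₁ = 1 + q ^ (-α) / c₁) (hk2def : k₂ = -q ^ (1 - α) / c₁) (hk3def : k₃ = 0)
    (hq0 : 0 < q) (hq1 : q < 1)
    (hk1 : k₁ ≠ 0) (hk2 : k₂ ≠ 0)
    (ha0 : a 0 = 0) (hr0 : r 0 = 0)
    (hcomp1 : ∀ n : ℕ, r (n + 1) + r n = -(b n * R n) - k₁)
    (hcomp2 : ∀ n : ℕ,
      R n - k₂ * b n / q ^ n - k₃ - (1 - q) * ∑ j ∈ Finset.range (n + 1), R j = 0)
    (hcomp30 : a 1 ^ 2 * R 1 = -(b 0 * (r 1 - r 0)))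
    (hcomp3 : ∀ n : ℕ,
      a (n + 2) ^ 2 * R (n + 2) - a (n + 1) ^ 2 * R n =
        -(b (n + 1) * (r (n + 2) - r (n + 1))))
    (hcomp4 : ∀ n : ℕ,
      k₂ * a (n + 1) ^ 2 - k₂ * q ^ 2 * a n ^ 2 =
        q ^ (1 + n) - q ^ (2 + n) - q ^ (2 + n) * r n + q ^ (1 + n) * r (n + 1))
    (x : ℕ → ℝ) (hx : ∀ m : ℕ, x m = Real.sqrt (-c₁) * q ^ (α / 2) * (1 + r m)) :
    (∀ n : ℕ, a n ^ 2 = -c₁ * q ^ ((n : ℝ) + α - 1) * (1 - q ^ n + r n)) ∧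
      ∀ n : ℕ, R (n + 1) ≠ 0 → R n ≠ 0 →
        1 - q ^ (n + 1) + r (n + 1) ≠ 0 → 1 - q ^ (n + 2) + r (n + 2) ≠ 0 →
        r n * (q ^ (n + 1) - 1 - r (n + 1)) + (q ^ (n + 1) - 1) * (r (n + 1) + k₁) ≠ 0 →
        (x (n + 1) * x n - 1) * (x (n + 1) * x (n + 2) - 1) *
            (x (n + 1) - Real.sqrt (-c₁) * q ^ ((n : ℝ) + 1 + α / 2)) ^ 2 =
          -c₁ * q ^ (2 * (n : ℝ) + 2 + α) *
            (x (n + 1) - Real.sqrt (-c₁) * q ^ (α / 2)) ^ 2 *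
            (x (n + 1) - 1 / (Real.sqrt (-c₁) * q ^ (α / 2))) ^ 2 := by
  subst hk1def hk2def hk3def
  have ⟨hA, hqP⟩ := ladder_example2_qPainleveV_general hq0 hc1
    ⟨by simp [ha0], hr0, hcomp1, hcomp2, hcomp30, hcomp3, hcomp4⟩ hx
  exact ⟨hA, fun n _ _ _ _ _ ↦ hqP n⟩
end
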